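/- Fix g = (A B; C D) ∈ SL₂(ℤ), j ∈ {1,...,n}, an integer m ≥ 1, and α ∈ ℂ. Suppose b₁,...,b_m : U → ℂ are functions such that, for each p = 1,...,m, b_p( z₁/(Cτ+D),...,z_n/(Cτ+D); (Aτ+B)/(Cτ+D) ) = (Cτ+D)^{2p}·b_p(z₁,...,z_n;τ) for all (z₁,...,z_n,τ) ∈ U. Let Φ ∈ χ satisfy the differential equation ( 𝒟_j(α+2(m−1)) ∘ 𝒟_j(α+2(m−2)) ∘ ⋯ ∘ 𝒟_j(α) ) Φ + Σ_{p=1}^{m} b_p · ( 𝒟_j(α+2(m−p−1)) ∘ ⋯ ∘ 𝒟_j(α) ) Φ = 0 on U (for p = m the composition is empty, so the corresponding term is b_m·Φ; multiplication of a family by a scalar-valued function is componentwise). Then Φ|_{g,α} satisfies the same differential equation; that is, the space of solutions of the equation is invariant under the slash action Φ ↦ Φ|_{g,α}. -/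

import Mathlib

open Complex Real

/-- The Weierstrass function `℘₁(z;τ)`. -/
noncomputable def wp1 (z τ : ℂ) : ℂ :=
  1 / z + ∑' p : {p : ℤ × ℤ // p ≠ (0, 0)},
    (1 / (z - ((p.1.1 : ℂ) * τ + (p.1.2 : ℂ))) + 1 / ((p.1.1 : ℂ) * τ + (p.1.2 : ℂ)) +
      z / ((p.1.1 : ℂ) * τ + (p.1.2 : ℂ)) ^ 2)

/-- The quasimodular Eisenstein series
`G₂(τ) = π²/3 + Σ_{m≠0} Σ_{l∈ℤ} (mτ+l)^{-2}` (iterated sum). -/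
noncomputable def G2 (τ : ℂ) : ℂ :=
  (Real.pi : ℂ) ^ 2 / 3 +
    ∑' m : {m : ℤ // m ≠ 0}, ∑' l : ℤ, 1 / (((m : ℤ) : ℂ) * τ + (l : ℂ)) ^ 2

/-- The domain `U = {(z₁,...,z_n,τ) : Im τ > 0, z_i − z_j ∉ Λ_τ for i ≠ j}`. -/
def Uset (n : ℕ) : Set ((Fin n → ℂ) × ℂ) :=
  {p | 0 < p.2.im ∧ ∀ i j : Fin n, i ≠ j → ∀ k l : ℤ,
    p.1 i - p.1 j ≠ (k : ℂ) * p.2 + (l : ℂ)}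

/-- The componentwise differential operator `𝒟_j(a)` acting on families
`Φ = (φ_μ)_{μ∈ℕⁿ}` of functions of `(z₁,...,z_n; τ)`:
`(𝒟_j(a)Φ)_μ = 2πi·∂φ_μ/∂τ + G₂(τ)·(a·φ_μ + Σ_i φ_{μ+e_i})
+ G₂(τ)·Σ_i z_i·∂φ_μ/∂z_i − Σ_{i≠j} ℘₁(z_i−z_j;τ)·∂φ_μ/∂z_i`. -/
noncomputable def DOp (n : ℕ) (a : ℂ) (j : Fin n)
    (Φ : (Fin n → ℕ) → (Fin n → ℂ) → ℂ → ℂ) :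
    (Fin n → ℕ) → (Fin n → ℂ) → ℂ → ℂ :=
  fun μ z τ =>
    2 * Real.pi * Complex.I * deriv (fun t => Φ μ z t) τ +
      G2 τ * (a * Φ μ z τ + ∑ i : Fin n, Φ (μ + Pi.single i 1) z τ) +
      G2 τ * ∑ i : Fin n, z i * deriv (fun s => Φ μ (Function.update z i s) τ) (z i) -
      ∑ i ∈ Finset.univ.filter (fun i : Fin n => i ≠ j),
        wp1 (z i - z j) τ * deriv (fun s => Φ μ (Function.update z i s) τ) (z i)

/-- The slash action `Φ ↦ Φ|_{g,a}` of `SL₂(ℤ)` on families `Φ = (φ_μ)_{μ∈ℕⁿ}`: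
`(Φ|_{g,a})_μ(z;τ) = (Cτ+D)^{−a}·Σ_ν ((−log(Cτ+D))^{|ν|}/ν!)·φ_{μ+ν}(z/(Cτ+D); (Aτ+B)/(Cτ+D))`,
with principal branches of powers and logarithms. -/
noncomputable def SlashAct (n : ℕ) (g : Matrix.SpecialLinearGroup (Fin 2) ℤ) (a : ℂ)
    (Φ : (Fin n → ℕ) → (Fin n → ℂ) → ℂ → ℂ) :
    (Fin n → ℕ) → (Fin n → ℂ) → ℂ → ℂ :=
  fun μ z τ =>
    ((g 1 0 : ℤ) * τ + (g 1 1 : ℤ)) ^ (-a) *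
      ∑' ν : Fin n → ℕ,
        ((-Complex.log ((g 1 0 : ℤ) * τ + (g 1 1 : ℤ))) ^ (∑ i : Fin n, ν i) /
            ∏ i : Fin n, (Nat.factorial (ν i) : ℂ)) *
          Φ (μ + ν) (fun i => z i / ((g 1 0 : ℤ) * τ + (g 1 1 : ℤ)))
            (((g 0 0 : ℤ) * τ + (g 0 1 : ℤ)) / ((g 1 0 : ℤ) * τ + (g 1 1 : ℤ)))

/-- The iterated operator `DIter α j m = 𝒟_j(α+2(m−1)) ∘ ⋯ ∘ 𝒟_j(α+2) ∘ 𝒟_j(α)`. -/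
noncomputable def DIter (n : ℕ) (α : ℂ) (j : Fin n) :
    ℕ → ((Fin n → ℕ) → (Fin n → ℂ) → ℂ → ℂ) → ((Fin n → ℕ) → (Fin n → ℂ) → ℂ → ℂ)
  | 0, Φ => Φ
  | k + 1, Φ => DOp n (α + 2 * (k : ℂ)) j (DIter n α j k Φ)

/-! ### The Eisenstein series `G₂` -/

open EisensteinSeries in
lemma summable_e2Summand (w : UpperHalfPlane) : Summable fun m : ℤ => e2Summand m w := by
  have hnat : Summable fun m : ℕ => e2Summand (m : ℤ) w := by
    rw [← summable_nat_add_iff 1]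
    have hs := (summable_prod_mul_pow 1
      (UpperHalfPlane.norm_exp_two_pi_I_lt_one w)).prod
    rw [summable_pnat_iff_summable_succ
      (f := fun d : ℕ => ∑' c : ℕ+, (c : ℂ) ^ 1 *
        Complex.exp (2 * π * Complex.I * w) ^ (d * c : ℕ))] at hs
    refine (hs.mul_left ((-2 * π * Complex.I) ^ 2)).congr fun a => ?_
    have hq := qExpansion_identity_pnat (k := 1) le_rfl
      ⟨((a : ℂ) + 1) * w, by
        simpa using mul_pos (show (0 : ℝ) < (a : ℝ) + 1 by positivity) w.im_pos⟩
    simp only [e2Summand, eisSummand]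
    have hl : ∀ l : ℤ, (((![((a + 1 : ℕ) : ℤ), l] 0 : ℤ) : ℂ) * (w : ℂ) +
        ((![((a + 1 : ℕ) : ℤ), l] 1 : ℤ) : ℂ)) ^ (-2 : ℤ) =
        1 / (((a : ℂ) + 1) * w + l) ^ (1 + 1) := by
      intro l
      simp [zpow_neg]
    simp only [hl]
    refine Eq.trans ?_ hq.symm
    simp only [Nat.factorial_one, Nat.cast_one, div_one, Nat.reduceAdd]
    congr 2
    ext c
    rw [pow_mul, ← Complex.exp_nat_mul _ (a + 1)]
    congr 3
    push_cast
    ring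
  rw [summable_int_iff_summable_nat_and_neg]
  exact ⟨hnat, hnat.congr fun m => (e2Summand_even w m).symm⟩

lemma G2_eq_eisenstein (w : UpperHalfPlane) : G2 w = EisensteinSeries.G2 w := by
  have hs := summable_e2Summand w
  rw [EisensteinSeries.G2, tsum_eq_of_summable_unconditional hs,
    ← (hs.subtype {m : ℤ | m ≠ 0}).tsum_add_tsum_compl (s := {m : ℤ | m ≠ 0})
      (hs.subtype _), add_comm, G2]
  have hc : ({m : ℤ | m ≠ 0}ᶜ : Set ℤ) = {0} := by ext; simp
  rw [hc, tsum_singleton (0 : ℤ) (fun m : ℤ => EisensteinSeries.e2Summand m w),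
    EisensteinSeries.e2Summand_zero_eq_two_riemannZeta_two, riemannZeta_two]
  congr 1
  · ring
  · refine tsum_congr fun m => tsum_congr fun l => ?_
    simp [EisensteinSeries.eisSummand, zpow_neg]

lemma differentiableOn_G2 : DifferentiableOn ℂ G2 {τ | 0 < τ.im} := by
  have h := UpperHalfPlane.mdifferentiable_iff.mp E2_mdifferentiable
  refine (h.const_mul (2 * riemannZeta 2)).congr fun τ hτ => ?_
  have hz : riemannZeta 2 ≠ 0 := riemannZeta_ne_zero_of_one_le_re (by simp)
  simp only [Function.comp_apply, UpperHalfPlane.ofComplex_apply_of_im_pos hτ, EisensteinSeries.E2,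
    Pi.smul_apply, smul_eq_mul, ← G2_eq_eisenstein]
  field_simp

section Modular

variable (g : Matrix.SpecialLinearGroup (Fin 2) ℤ)

lemma denom_ne_zero_of_im_pos {τ : ℂ} (hτ : 0 < τ.im) :
    ((g 1 0 : ℤ) : ℂ) * τ + (g 1 1 : ℤ) ≠ 0 := by
  have h := UpperHalfPlane.denom_ne_zero g ⟨τ, hτ⟩
  rwa [ModularGroup.denom_apply] at h

lemma smul_eq_div {τ : ℂ} (hτ : 0 < τ.im) :
    ((g • (⟨τ, hτ⟩ : UpperHalfPlane) : UpperHalfPlane) : ℂ) =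
      (((g 0 0 : ℤ) : ℂ) * τ + (g 0 1 : ℤ)) / (((g 1 0 : ℤ) : ℂ) * τ + (g 1 1 : ℤ)) := by
  simp [UpperHalfPlane.specialLinearGroup_apply]

lemma im_moebius_pos {τ : ℂ} (hτ : 0 < τ.im) :
    0 < ((((g 0 0 : ℤ) : ℂ) * τ + (g 0 1 : ℤ)) / (((g 1 0 : ℤ) : ℂ) * τ + (g 1 1 : ℤ))).im := by
  rw [← smul_eq_div g hτ]
  exact UpperHalfPlane.im_pos _

lemma G2_moebius {τ : ℂ} (hτ : 0 < τ.im) :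
    G2 τ = (((g 1 0 : ℤ) : ℂ) * τ + (g 1 1 : ℤ)) ^ (-2 : ℤ) *
        G2 ((((g 0 0 : ℤ) : ℂ) * τ + (g 0 1 : ℤ)) / (((g 1 0 : ℤ) : ℂ) * τ + (g 1 1 : ℤ))) +
      2 * π * Complex.I * (g 1 0 : ℤ) / (((g 1 0 : ℤ) : ℂ) * τ + (g 1 1 : ℤ)) := by
  have h := congrFun (EisensteinSeries.G2_slash_action g) ⟨τ, hτ⟩
  rw [ModularForm.SL_slash_apply, Pi.sub_apply, EisensteinSeries.D2, ModularGroup.denom_apply,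
    ← G2_eq_eisenstein, ← G2_eq_eisenstein, smul_eq_div] at h
  rw [mul_comm, h]
  simp

lemma det_cast : ((g 0 0 : ℤ) : ℂ) * (g 1 1 : ℤ) - (g 0 1 : ℤ) * (g 1 0 : ℤ) = 1 := by
  have := g.det_coe
  rw [Matrix.det_fin_two] at this
  exact_mod_cast this

/-- The bijection `(k, l) ↦ (k, l) g` of `ℤ² ∖ {0}`. -/
def latticeEquiv : {p : ℤ × ℤ // p ≠ (0, 0)} ≃ {p : ℤ × ℤ // p ≠ (0, 0)} :=
  Equiv.subtypeEquiv
    { toFun := fun p => (p.1 * g 0 0 + p.2 * g 1 0, p.1 * g 0 1 + p.2 * g 1 1)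
      invFun := fun p => (p.1 * g 1 1 - p.2 * g 1 0, p.2 * g 0 0 - p.1 * g 0 1)
      left_inv := fun p => by
        have h := g.det_coe
        rw [Matrix.det_fin_two] at h
        ext
        · linear_combination p.1 * h
        · linear_combination p.2 * h
      right_inv := fun p => by
        have h := g.det_coe
        rw [Matrix.det_fin_two] at h
        ext
        · linear_combination p.1 * h
        · linear_combination p.2 * h }
    (fun p => by
      have h := g.det_coe
      rw [Matrix.det_fin_two] at h
      refine not_congr ⟨fun hp => by simp [hp], fun hp => ?_⟩
      simp only [Equiv.coe_fn_mk, Prod.mk.injEq] at hp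
      ext
      · linear_combination (g 1 1) * hp.1 - (g 1 0) * hp.2 - p.1 * h
      · linear_combination (g 0 0) * hp.2 - (g 0 1) * hp.1 - p.2 * h)

lemma wp1_moebius {τ : ℂ} (hτ : 0 < τ.im) (w : ℂ) :
    wp1 (w / (((g 1 0 : ℤ) : ℂ) * τ + (g 1 1 : ℤ)))
      ((((g 0 0 : ℤ) : ℂ) * τ + (g 0 1 : ℤ)) / (((g 1 0 : ℤ) : ℂ) * τ + (g 1 1 : ℤ))) =
      (((g 1 0 : ℤ) : ℂ) * τ + (g 1 1 : ℤ)) * wp1 w τ := by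
  have hγ := denom_ne_zero_of_im_pos g hτ
  rw [wp1, wp1, mul_add, ← tsum_mul_left]
  congr 1
  · field_simp
  refine (tsum_congr fun p => ?_).trans ((latticeEquiv g).tsum_eq _)
  simp only [latticeEquiv, Equiv.subtypeEquiv_apply, Equiv.coe_fn_mk]
  push_cast
  set γ := ((g 1 0 : ℤ) : ℂ) * τ + (g 1 1 : ℤ) with hγdef
  set ω := ((p.1.1 : ℂ) * (g 0 0 : ℤ) + p.1.2 * (g 1 0 : ℤ)) * τ +
    ((p.1.1 : ℂ) * (g 0 1 : ℤ) + p.1.2 * (g 1 1 : ℤ)) with hω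
  have h : (p.1.1 : ℂ) * ((((g 0 0 : ℤ) : ℂ) * τ + (g 0 1 : ℤ)) / γ) + p.1.2 = ω / γ := by
    field_simp
    rw [hω, hγdef]
    ring
  rw [h, ← sub_div, one_div_div, one_div_div, div_pow, div_div_div_eq]
  field_simp

end Modular

/-! ### Holomorphic functions on open subsets of complex normed spaces -/

section Holomorphic

open Metric Set MeasureTheory

variable {E : Type*} [NormedAddCommGroup E] [NormedSpace ℂ E]

lemma norm_fderiv_le_of_norm_le {f : E → ℂ} {x₀ x : E} {r M : ℝ} (hr : 0 < r)
    (hf : DifferentiableOn ℂ f (ball x₀ (2 * r))) (hM : ∀ y ∈ ball x₀ (2 * r), ‖f y‖ ≤ M)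
    (hx : x ∈ ball x₀ r) : ‖fderiv ℂ f x‖ ≤ 2 * M / r := by
  have hsub : ball x r ⊆ ball x₀ (2 * r) := by
    refine ball_subset_ball' ?_
    have := mem_ball.mp hx
    linarith
  refine Complex.norm_fderiv_le_div_of_mapsTo_ball (hf.mono hsub) (fun y hy => ?_) hr
  rw [mem_closedBall, dist_eq_norm]
  have h₁ := hM y (hsub hy)
  have h₂ := hM x (hsub (mem_ball_self hr))
  linarith [norm_sub_le (f y) (f x)]

lemma differentiableAt_tsum_of_norm_le {ι : Type*} {f : ι → E → ℂ} {u : ι → ℝ} {x₀ : E} {r : ℝ}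
    (hr : 0 < r) (hu : Summable u) (hf : ∀ i, DifferentiableOn ℂ (f i) (ball x₀ (2 * r)))
    (hfu : ∀ i, ∀ x ∈ ball x₀ (2 * r), ‖f i x‖ ≤ u i) :
    DifferentiableAt ℂ (fun x => ∑' i, f i x) x₀ := by
  let : NormedSpace ℝ E := NormedSpace.restrictScalars ℝ ℂ E
  have hx₀ : x₀ ∈ ball x₀ r := mem_ball_self hr
  have hsub : ball x₀ r ⊆ ball x₀ (2 * r) := ball_subset_ball (by linarith)
  refine (hasFDerivAt_tsum_of_isPreconnected (u := fun i => 2 * u i / r)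
    (f' := fun i x => fderiv ℂ (f i) x) ((hu.mul_left 2).div_const r) isOpen_ball
    (convex_ball x₀ r).isPreconnected (fun i x hx => ?_) (fun i x hx => ?_) hx₀ ?_
    hx₀).differentiableAt
  · exact ((hf i).differentiableAt (isOpen_ball.mem_nhds (hsub hx))).hasFDerivAt
  · exact norm_fderiv_le_of_norm_le hr (hf i) (hfu i) hx
  · exact hu.of_norm_bounded fun i => hfu i x₀ (hsub hx₀)

/-- Directional derivatives of a holomorphic function are holomorphic. -/
lemma differentiableOn_fderiv_apply [FiniteDimensional ℂ E] {f : E → ℂ} {U : Set E}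
    (hU : IsOpen U) (hf : DifferentiableOn ℂ f U) (v : E) :
    DifferentiableOn ℂ (fun x => fderiv ℂ f x v) U := by
  intro x₀ hx₀
  refine DifferentiableAt.differentiableWithinAt ?_
  borelize E
  have : ProperSpace E := FiniteDimensional.proper ℂ E
  -- a ball on which `f` is bounded
  obtain ⟨r, hr, M, hrU, hM⟩ : ∃ r > 0, ∃ M : ℝ, ball x₀ (2 * r) ⊆ U ∧
      ∀ y ∈ ball x₀ (2 * r), ‖f y‖ ≤ M := by
    have hc : ContinuousAt f x₀ := (hf.differentiableAt (hU.mem_nhds hx₀)).continuousAt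
    have hb : ∀ᶠ y in nhds x₀, ‖f y‖ < ‖f x₀‖ + 1 :=
      hc.norm.eventually_lt continuousAt_const (by simp)
    obtain ⟨ε, hε, h⟩ := Metric.eventually_nhds_iff_ball.mp (hb.and (hU.mem_nhds hx₀))
    refine ⟨ε / 2, by positivity, ‖f x₀‖ + 1, ?_, ?_⟩ <;> rw [mul_div_cancel₀ ε two_ne_zero]
    exacts [fun y hy => (h y hy).2, fun y hy => (h y hy).1.le]
  have hfr := hf.mono hrU
  -- radius of the circle in the direction `v`
  set ρ : ℝ := r / (2 * (‖v‖ + 1)) with hρ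
  have hρ0 : 0 < ρ := by positivity
  have hρv : ρ * ‖v‖ < r / 2 := by
    rw [hρ, div_mul_eq_mul_div, div_lt_div_iff₀ (by positivity) two_pos]
    nlinarith [norm_nonneg v]
  have hmem : ∀ x ∈ ball x₀ (r / 2), ∀ s ∈ closedBall (0 : ℂ) ρ, x + s • v ∈ ball x₀ r := by
    intro x hx s hs
    rw [mem_ball, dist_eq_norm] at hx ⊢
    rw [mem_closedBall, dist_zero_right] at hs
    calc ‖x + s • v - x₀‖ = ‖(x - x₀) + s • v‖ := by congr 1; abel
      _ ≤ ‖x - x₀‖ + ‖s‖ * ‖v‖ := (norm_add_le _ _).trans_eq (by rw [norm_smul])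
      _ ≤ ‖x - x₀‖ + ρ * ‖v‖ := by gcongr
      _ < r := by linarith
  have hsub : ball x₀ r ⊆ ball x₀ (2 * r) := ball_subset_ball (by linarith)
  have hdiff : ∀ y ∈ ball x₀ r, DifferentiableAt ℂ f y := fun y hy =>
    hfr.differentiableAt (isOpen_ball.mem_nhds (hsub hy))
  have hcirc : ∀ θ, circleMap (0 : ℂ) ρ θ ∈ closedBall (0 : ℂ) ρ := fun θ =>
    circleMap_mem_closedBall 0 hρ0.le θ
  -- Cauchy's formula
  have hcauchy : ∀ x ∈ ball x₀ (r / 2), fderiv ℂ f x v = (2 * π * Complex.I)⁻¹ *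
      ∮ s in C(0, ρ), (1 / (s - 0) ^ 2) • f (x + s • v) := by
    intro x hx
    have hline : ∀ s ∈ closedBall (0 : ℂ) ρ, HasDerivAt (fun s : ℂ => f (x + s • v))
        (fderiv ℂ f (x + s • v) v) s := by
      intro s hs
      have h₁ : HasDerivAt (fun s : ℂ => x + s • v) v s := by
        simpa using ((hasDerivAt_id s).smul_const v).const_add x
      exact (hdiff _ (hmem x hx s hs)).hasFDerivAt.comp_hasDerivAt s h₁
    have h := DifferentiableOn.deriv_eq_smul_circleIntegral (f := fun s : ℂ => f (x + s • v))
      hρ0 (fun s hs => (hline s hs).differentiableAt.differentiableWithinAt)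
    rw [h, (hline 0 (mem_closedBall_self hρ0.le)).deriv, zero_smul, add_zero, smul_eq_mul,
      inv_mul_cancel_left₀]
    simp [Real.pi_ne_zero]
  set κ : ℝ → ℂ := fun θ => deriv (circleMap 0 ρ) θ * (1 / (circleMap 0 ρ θ - 0) ^ 2) with hκ
  have hκc : Continuous κ := by
    have : ∀ θ, (circleMap 0 ρ θ - 0) ^ 2 ≠ 0 := fun θ => by
      simp [hρ0.ne']
    simp only [hκ, deriv_circleMap]
    fun_prop (disch := assumption)
  have hcont : ∀ x ∈ ball x₀ (r / 2), Continuous fun θ => κ θ * f (x + circleMap 0 ρ θ • v) := by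
    intro x hx
    refine hκc.mul (continuous_iff_continuousAt.mpr fun θ => ?_)
    refine ContinuousAt.comp (g := f) (hdiff _ (hmem x hx _ (hcirc θ))).continuousAt ?_
    fun_prop
  have hball : ball x₀ (r / 2) ∈ nhds x₀ := ball_mem_nhds _ (by positivity)
  have key : HasFDerivAt (fun x => ∫ θ in Ioc 0 (2 * π), κ θ * f (x + circleMap 0 ρ θ • v))
      (∫ θ in Ioc 0 (2 * π), κ θ • fderiv ℂ f (x₀ + circleMap 0 ρ θ • v)) x₀ := by
    refine hasFDerivAt_integral_of_dominated_of_fderiv_le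
      (F' := fun x θ => κ θ • fderiv ℂ f (x + circleMap 0 ρ θ • v))
      (bound := fun θ => ‖κ θ‖ * (2 * M / r)) hball ?_ ?_ ?_ ?_ ?_ ?_
    · filter_upwards [hball] with x hx
      exact (hcont x hx).aestronglyMeasurable
    · exact ((hcont x₀ (mem_of_mem_nhds hball)).integrableOn_Icc).mono_set Ioc_subset_Icc_self
    · refine hκc.aestronglyMeasurable.smul ?_
      refine Measurable.aestronglyMeasurable ?_
      refine (measurable_fderiv ℂ f).comp (Continuous.measurable ?_)
      fun_prop
    · refine Filter.Eventually.of_forall fun θ x hx => ?_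
      rw [norm_smul]
      gcongr
      exact norm_fderiv_le_of_norm_le hr hfr hM (hmem x hx _ (hcirc θ))
    · exact ((hκc.norm.mul continuous_const).integrableOn_Icc).mono_set Ioc_subset_Icc_self
    · refine Filter.Eventually.of_forall fun θ x hx => ?_
      have h := (hdiff _ (hmem x hx _ (hcirc θ))).hasFDerivAt.comp x
        ((hasFDerivAt_id x).add_const (circleMap 0 ρ θ • v))
      exact h.const_mul (κ θ)
  refine (key.differentiableAt.const_mul (2 * π * Complex.I)⁻¹).congr_of_eventuallyEq ?_
  filter_upwards [hball] with x hx
  rw [hcauchy x hx, circleIntegral, intervalIntegral.integral_of_le (by positivity)]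
  simp only [hκ, smul_eq_mul, mul_assoc]

end Holomorphic

/-! ### Holomorphy of `℘₁` -/

section Lattice

open Metric

/-- Locally uniform lower bounds for the lattice distances occurring in `℘₁`. -/
lemma exists_lattice_lower_bound {w₀ τ₀ : ℂ} (hτ₀ : 0 < τ₀.im)
    (hw₀ : ∀ k l : ℤ, w₀ ≠ (k : ℂ) * τ₀ + (l : ℂ)) :
    ∃ c > 0, ∃ δ > 0, ∀ x ∈ ball (w₀, τ₀) δ, 0 < x.2.im ∧ ∀ q : Fin 2 → ℤ,
      c * (1 + ‖q‖) ≤ ‖x.1 - ((q 0 : ℂ) * x.2 + (q 1 : ℂ))‖ ∧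
      (q ≠ 0 → c * ‖q‖ ≤ ‖(q 0 : ℂ) * x.2 + (q 1 : ℂ)‖) := by
  set r := EisensteinSeries.r ⟨τ₀, hτ₀⟩ with hrdef
  have hr : 0 < r := EisensteinSeries.r_pos _
  have hrq : ∀ q : Fin 2 → ℤ, r * ‖q‖ ≤ ‖(q 0 : ℂ) * τ₀ + (q 1 : ℂ)‖ := by
    intro q
    by_cases hq : q = 0
    · simp [hq]
    · exact EisensteinSeries.r_mul_max_le ⟨τ₀, hτ₀⟩ hq
  -- the bound at the centre
  obtain ⟨c₀, hc₀, hc₀q⟩ : ∃ c₀ > 0, ∀ q : Fin 2 → ℤ,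
      c₀ * (1 + ‖q‖) ≤ ‖w₀ - ((q 0 : ℂ) * τ₀ + (q 1 : ℂ))‖ := by
    have hpos : ∀ q : Fin 2 → ℤ, 0 < ‖w₀ - ((q 0 : ℂ) * τ₀ + (q 1 : ℂ))‖ := fun q =>
      norm_pos_iff.mpr (sub_ne_zero.mpr (hw₀ _ _))
    set R : ℝ := 2 * (‖w₀‖ + r) / r with hR
    have hfin : (closedBall (0 : Fin 2 → ℤ) R).Finite :=
      (isCompact_closedBall 0 R).finite_of_discrete
    obtain ⟨K, hK⟩ := (hfin.image fun q : Fin 2 → ℤ =>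
      (1 + ‖q‖) / ‖w₀ - ((q 0 : ℂ) * τ₀ + (q 1 : ℂ))‖).bddAbove
    refine ⟨min (r / 2) (1 / (|K| + 1)), by positivity, fun q => ?_⟩
    by_cases hq : ‖q‖ ≤ R
    · have h := hK (Set.mem_image_of_mem _ (by simpa using hq))
      rw [div_le_iff₀ (hpos q)] at h
      calc _ ≤ 1 / (|K| + 1) * (1 + ‖q‖) := by gcongr; exact min_le_right _ _
        _ ≤ 1 / (|K| + 1) * ((|K| + 1) * ‖w₀ - ((q 0 : ℂ) * τ₀ + (q 1 : ℂ))‖) := by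
          gcongr
          refine h.trans ?_
          gcongr
          linarith [le_abs_self K]
        _ = _ := by field_simp
    · have h : 2 * (‖w₀‖ + r) < ‖q‖ * r := (div_lt_iff₀ hr).mp (not_le.mp hq)
      have h₂ := norm_sub_norm_le ((q 0 : ℂ) * τ₀ + (q 1 : ℂ)) w₀
      rw [norm_sub_rev] at h₂
      calc _ ≤ r / 2 * (1 + ‖q‖) := by gcongr; exact min_le_left _ _
        _ ≤ _ := by nlinarith [hrq q, norm_nonneg w₀]
  set δ : ℝ := min (min (c₀ / 2) (r / 2)) τ₀.im with hδ
  refine ⟨min (c₀ / 2) (r / 2), by positivity, δ, by positivity, fun x hx => ?_⟩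
  rw [mem_ball, dist_eq_norm, Prod.norm_def, max_lt_iff] at hx
  obtain ⟨hx₁, hx₂⟩ := hx
  simp only [Prod.fst_sub, Prod.snd_sub] at hx₁ hx₂
  have hδ₁ : δ ≤ c₀ / 2 := (min_le_left _ _).trans (min_le_left _ _)
  have hδ₂ : δ ≤ r / 2 := (min_le_left _ _).trans (min_le_right _ _)
  have hδ₃ : δ ≤ τ₀.im := min_le_right _ _
  have hq0 : ∀ q : Fin 2 → ℤ, ‖(q 0 : ℂ)‖ ≤ ‖q‖ := fun q => by
    rw [Complex.norm_intCast, ← Int.norm_eq_abs]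
    exact norm_le_pi_norm q 0
  have hdiff : ∀ q : Fin 2 → ℤ, ‖(q 0 : ℂ) * (x.2 - τ₀)‖ ≤ δ * ‖q‖ := fun q => by
    rw [norm_mul, mul_comm]
    gcongr
    exact hq0 q
  refine ⟨?_, fun q => ⟨?_, fun _ => ?_⟩⟩
  · have h := (Complex.abs_im_le_norm (x.2 - τ₀)).trans_lt hx₂
    rw [Complex.sub_im, abs_lt] at h
    linarith
  · have h : w₀ - ((q 0 : ℂ) * τ₀ + (q 1 : ℂ)) = (x.1 - ((q 0 : ℂ) * x.2 + (q 1 : ℂ))) -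
        (x.1 - w₀) + (q 0 : ℂ) * (x.2 - τ₀) := by ring
    have h₁ := hc₀q q
    rw [h] at h₁
    have h₂ := (norm_add_le _ _).trans (add_le_add_left (norm_sub_le
      (x.1 - ((q 0 : ℂ) * x.2 + (q 1 : ℂ))) (x.1 - w₀)) ‖(q 0 : ℂ) * (x.2 - τ₀)‖)
    have h₃ : min (c₀ / 2) (r / 2) * (1 + ‖q‖) ≤ c₀ / 2 * (1 + ‖q‖) := by
      gcongr
      exact min_le_left _ _
    nlinarith [hdiff q, norm_nonneg q]
  · have h : (q 0 : ℂ) * τ₀ + (q 1 : ℂ) = ((q 0 : ℂ) * x.2 + (q 1 : ℂ)) -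
        (q 0 : ℂ) * (x.2 - τ₀) := by ring
    have h₁ := hrq q
    rw [h] at h₁
    have h₂ := norm_sub_le ((q 0 : ℂ) * x.2 + (q 1 : ℂ)) ((q 0 : ℂ) * (x.2 - τ₀))
    have h₃ : min (c₀ / 2) (r / 2) * ‖q‖ ≤ r / 2 * ‖q‖ := by
      gcongr
      exact min_le_right _ _
    nlinarith [hdiff q, norm_nonneg q]

/-- The open set of pairs `(w, τ)` on which `℘₁(w;τ)` is holomorphic. -/
def latticeCompl : Set (ℂ × ℂ) :=
  {x | 0 < x.2.im ∧ ∀ k l : ℤ, x.1 ≠ (k : ℂ) * x.2 + (l : ℂ)}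

lemma isOpen_latticeCompl : IsOpen latticeCompl := by
  rw [Metric.isOpen_iff]
  rintro ⟨w₀, τ₀⟩ ⟨hτ₀, hw₀⟩
  obtain ⟨c, hc, δ, hδ, h⟩ := exists_lattice_lower_bound hτ₀ hw₀
  refine ⟨δ, hδ, fun x hx => ⟨(h x hx).1, fun k l hkl => ?_⟩⟩
  have h₁ := ((h x hx).2 ![k, l]).1
  simp only [Matrix.cons_val_zero, Matrix.cons_val_one, ← hkl, sub_self, norm_zero] at h₁
  have : 0 < c * (1 + ‖![k, l]‖) := by positivity
  linarith

lemma differentiableOn_wp1 :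
    DifferentiableOn ℂ (fun x : ℂ × ℂ => wp1 x.1 x.2) latticeCompl := by
  rintro ⟨w₀, τ₀⟩ ⟨hτ₀, hw₀⟩
  refine DifferentiableAt.differentiableWithinAt ?_
  obtain ⟨c, hc, δ, hδ, h⟩ := exists_lattice_lower_bound hτ₀ hw₀
  have hw₀' : w₀ ≠ 0 := by simpa using hw₀ 0 0
  refine DifferentiableAt.add (by fun_prop (disch := exact hw₀')) ?_
  have hinj : Function.Injective
      fun p : {p : ℤ × ℤ // p ≠ (0, 0)} => (![p.1.1, p.1.2] : Fin 2 → ℤ) := by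
    intro p p' hp
    have h₀ := congrFun hp 0
    have h₁ := congrFun hp 1
    simp only [Matrix.cons_val_zero, Matrix.cons_val_one] at h₀ h₁
    exact Subtype.ext (Prod.ext h₀ h₁)
  have hne : ∀ p : {p : ℤ × ℤ // p ≠ (0, 0)}, (![p.1.1, p.1.2] : Fin 2 → ℤ) ≠ 0 := by
    intro p hp
    have h₀ := congrFun hp 0
    have h₁ := congrFun hp 1
    simp only [Matrix.cons_val_zero, Matrix.cons_val_one, Pi.zero_apply] at h₀ h₁
    exact p.2 (Prod.ext h₀ h₁)
  refine differentiableAt_tsum_of_norm_le (r := δ / 2)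
    (u := fun p : {p : ℤ × ℤ // p ≠ (0, 0)} =>
      (‖w₀‖ + δ) ^ 2 / c ^ 3 * ‖(![p.1.1, p.1.2] : Fin 2 → ℤ)‖ ^ (-3 : ℝ))
    (by positivity) ?_ (fun p => ?_) (fun p => ?_)
  · exact ((EisensteinSeries.summable_one_div_norm_rpow (k := 3) (by norm_num)).comp_injective
      hinj).mul_left _
  all_goals
    rw [mul_div_cancel₀ δ two_ne_zero]
    have hq := hne p
    have hqpos : 0 < ‖(![p.1.1, p.1.2] : Fin 2 → ℤ)‖ := norm_pos_iff.mpr hq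
    have hb := fun x hx => (h x hx).2 ![p.1.1, p.1.2]
    simp only [Matrix.cons_val_zero, Matrix.cons_val_one] at hb
    set N := ‖(![p.1.1, p.1.2] : Fin 2 → ℤ)‖ with hN
    have hω : ∀ x ∈ ball (w₀, τ₀) δ, (p.1.1 : ℂ) * x.2 + (p.1.2 : ℂ) ≠ 0 := fun x hx =>
      norm_pos_iff.mp ((mul_pos hc hqpos).trans_le ((hb x hx).2 hq))
    have hwω : ∀ x ∈ ball (w₀, τ₀) δ, x.1 - ((p.1.1 : ℂ) * x.2 + (p.1.2 : ℂ)) ≠ 0 := fun x hx =>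
      norm_pos_iff.mp ((show 0 < c * (1 + N) by positivity).trans_le (hb x hx).1)
  · intro x hx
    have h₁ := hω x hx
    have h₂ := hwω x hx
    refine DifferentiableAt.differentiableWithinAt ?_
    have h₃ := pow_ne_zero 2 h₁
    fun_prop (disch := assumption)
  · intro x hx
    have h₁ := hω x hx
    have h₂ := hwω x hx
    have hx₁ : ‖x.1‖ ≤ ‖w₀‖ + δ := by
      rw [mem_ball, dist_eq_norm, Prod.norm_def, max_lt_iff] at hx
      have := norm_sub_norm_le x.1 w₀
      have := hx.1
      simp only [Prod.fst_sub] at this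
      linarith
    have hb₁ : c * N ≤ ‖x.1 - ((p.1.1 : ℂ) * x.2 + (p.1.2 : ℂ))‖ :=
      (by nlinarith : c * N ≤ c * (1 + N)).trans (hb x hx).1
    have hb₂ := (hb x hx).2 hq
    have heq : 1 / (x.1 - ((p.1.1 : ℂ) * x.2 + (p.1.2 : ℂ))) +
        1 / ((p.1.1 : ℂ) * x.2 + (p.1.2 : ℂ)) + x.1 / ((p.1.1 : ℂ) * x.2 + (p.1.2 : ℂ)) ^ 2 =
        x.1 ^ 2 / (((p.1.1 : ℂ) * x.2 + (p.1.2 : ℂ)) ^ 2 *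
          (x.1 - ((p.1.1 : ℂ) * x.2 + (p.1.2 : ℂ)))) := by
      generalize (p.1.1 : ℂ) * x.2 + (p.1.2 : ℂ) = ω at h₁ h₂ ⊢
      field_simp
      ring
    rw [heq, norm_div, norm_mul, norm_pow, norm_pow]
    calc _ ≤ (‖w₀‖ + δ) ^ 2 / ((c * N) ^ 2 * (c * N)) := by gcongr
      _ = _ := by
        rw [Real.rpow_neg hqpos.le, show (3 : ℝ) = (3 : ℕ) by norm_num, Real.rpow_natCast]
        field_simp

lemma isOpen_Uset (n : ℕ) : IsOpen (Uset n) := by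
  have h : Uset n = {p | 0 < p.2.im} ∩ ⋂ (i : Fin n) (j : Fin n) (_ : i ≠ j),
      (fun p : (Fin n → ℂ) × ℂ => (p.1 i - p.1 j, p.2)) ⁻¹' latticeCompl := by
    ext p
    simp only [Uset, latticeCompl, Set.mem_ofPred_eq, Set.mem_inter_iff, Set.mem_iInter,
      Set.mem_preimage]
    exact ⟨fun hp => ⟨hp.1, fun i j hij => ⟨hp.1, hp.2 i j hij⟩⟩,
      fun hp => ⟨hp.1, fun i j hij => (hp.2 i j hij).2⟩⟩
  rw [h]
  refine (isOpen_lt continuous_const (by fun_prop)).inter ?_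
  refine isOpen_iInter_of_finite fun i => isOpen_iInter_of_finite fun j =>
    isOpen_iInter_of_finite fun _ => isOpen_latticeCompl.preimage (by fun_prop)

end Lattice

/-! ### The class `χ` -/

section Families

variable {n : ℕ}

/-- Membership in `χ`: holomorphic components on `U`, almost all of which vanish. -/
structure IsChi (Φ : (Fin n → ℕ) → (Fin n → ℂ) → ℂ → ℂ) : Prop where
  differentiableOn : ∀ μ, DifferentiableOn ℂ (fun p : (Fin n → ℂ) × ℂ => Φ μ p.1 p.2) (Uset n)
  eq_zero : ∃ N : ℕ, ∀ μ : Fin n → ℕ, (∃ i, N ≤ μ i) → Φ μ = 0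

/-- The partial derivative in the direction of `z_i`. -/
noncomputable def partialZ (i : Fin n) (φ : (Fin n → ℂ) → ℂ → ℂ) (z : Fin n → ℂ) (τ : ℂ) : ℂ :=
  fderiv ℂ (fun p : (Fin n → ℂ) × ℂ => φ p.1 p.2) (z, τ) (Pi.single i 1, 0)

/-- The partial derivative in the direction of `τ`. -/
noncomputable def partialTau (φ : (Fin n → ℂ) → ℂ → ℂ) (z : Fin n → ℂ) (τ : ℂ) : ℂ :=
  fderiv ℂ (fun p : (Fin n → ℂ) × ℂ => φ p.1 p.2) (z, τ) (0, 1)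

lemma fderiv_apply_eq_partials (φ : (Fin n → ℂ) → ℂ → ℂ) (z v : Fin n → ℂ) (τ t : ℂ) :
    fderiv ℂ (fun p : (Fin n → ℂ) × ℂ => φ p.1 p.2) (z, τ) (v, t) =
      ∑ i, v i * partialZ i φ z τ + t * partialTau φ z τ := by
  have hv : (v, t) = ∑ i, v i • ((Pi.single i 1 : Fin n → ℂ), (0 : ℂ)) +
      t • ((0 : Fin n → ℂ), (1 : ℂ)) := by
    refine Prod.ext ?_ ?_
    · ext k
      simp [Prod.fst_sum, Finset.sum_apply, Pi.single_apply]
    · simp [Prod.snd_sum]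
  rw [hv, map_add, map_sum, map_smul]
  simp only [map_smul, smul_eq_mul, partialZ, partialTau]

lemma hasDerivAt_update_div (z : Fin n → ℂ) (i : Fin n) (c s : ℂ) :
    HasDerivAt (fun s k => Function.update z i s k / c) (Pi.single i (1 / c)) s := by
  refine hasDerivAt_pi.mpr fun k => ?_
  rcases eq_or_ne k i with rfl | hk
  · simpa using (hasDerivAt_id s).div_const c
  · simpa [hk] using hasDerivAt_const s (z k / c)

namespace IsChi

variable {Φ : (Fin n → ℕ) → (Fin n → ℂ) → ℂ → ℂ}

lemma hasFDerivAt (hΦ : IsChi Φ) (μ : Fin n → ℕ) {z : Fin n → ℂ} {τ : ℂ} (h : (z, τ) ∈ Uset n) :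
    HasFDerivAt (fun p : (Fin n → ℂ) × ℂ => Φ μ p.1 p.2)
      (fderiv ℂ (fun p : (Fin n → ℂ) × ℂ => Φ μ p.1 p.2) (z, τ)) (z, τ) :=
  ((hΦ.differentiableOn μ).differentiableAt ((isOpen_Uset n).mem_nhds h)).hasFDerivAt

lemma hasDerivAt_comp (hΦ : IsChi Φ) (μ : Fin n → ℕ)
    {f : ℂ → Fin n → ℂ} {h : ℂ → ℂ} {v : Fin n → ℂ} {t s : ℂ}
    (hf : HasDerivAt f v s) (hh : HasDerivAt h t s) (hU : (f s, h s) ∈ Uset n) :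
    HasDerivAt (fun s => Φ μ (f s) (h s))
      (∑ i, v i * partialZ i (Φ μ) (f s) (h s) + t * partialTau (Φ μ) (f s) (h s)) s := by
  rw [← fderiv_apply_eq_partials]
  exact HasFDerivAt.comp_hasDerivAt (f := fun s => (f s, h s)) s (hΦ.hasFDerivAt μ hU)
    (hf.prodMk hh)

lemma deriv_tau (hΦ : IsChi Φ) (μ : Fin n → ℕ) {z : Fin n → ℂ} {τ : ℂ} (h : (z, τ) ∈ Uset n) :
    deriv (fun t => Φ μ z t) τ = partialTau (Φ μ) z τ := by
  simpa using (hΦ.hasDerivAt_comp μ (hasDerivAt_const τ z) (hasDerivAt_id τ) h).deriv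

lemma hasDerivAt_update (hΦ : IsChi Φ) (μ : Fin n → ℕ) {z : Fin n → ℂ} {τ c : ℂ}
    (h : ((fun k => z k / c), τ) ∈ Uset n) (i : Fin n) :
    HasDerivAt (fun s => Φ μ (fun k => Function.update z i s k / c) τ)
      (1 / c * partialZ i (Φ μ) (fun k => z k / c) τ) (z i) := by
  have h' := hΦ.hasDerivAt_comp μ (hasDerivAt_update_div z i c (z i))
    (hasDerivAt_const (z i) τ) (by simpa using h)
  simpa [Pi.single_apply] using h'

lemma deriv_update (hΦ : IsChi Φ) (μ : Fin n → ℕ)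
    {z : Fin n → ℂ} {τ : ℂ} (h : (z, τ) ∈ Uset n) (i : Fin n) :
    deriv (fun s => Φ μ (Function.update z i s) τ) (z i) = partialZ i (Φ μ) z τ := by
  simpa using (hΦ.hasDerivAt_update (c := 1) μ (by simpa using h) i).deriv

lemma DOp_eq (hΦ : IsChi Φ) (a : ℂ) (j : Fin n) (μ : Fin n → ℕ) {z : Fin n → ℂ} {τ : ℂ}
    (h : (z, τ) ∈ Uset n) :
    DOp n a j Φ μ z τ = 2 * π * Complex.I * partialTau (Φ μ) z τ +
      G2 τ * (a * Φ μ z τ + ∑ i, Φ (μ + Pi.single i 1) z τ) +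
      G2 τ * ∑ i, z i * partialZ i (Φ μ) z τ -
      ∑ i ∈ Finset.univ.filter (fun i : Fin n => i ≠ j),
        wp1 (z i - z j) τ * partialZ i (Φ μ) z τ := by
  simp only [DOp, hΦ.deriv_tau μ h, hΦ.deriv_update μ h]

lemma dOp (hΦ : IsChi Φ) (a : ℂ) (j : Fin n) : IsChi (DOp n a j Φ) where
  differentiableOn μ := by
    have hZ : ∀ i, DifferentiableOn ℂ
        (fun p : (Fin n → ℂ) × ℂ => partialZ i (Φ μ) p.1 p.2) (Uset n) := fun i =>
      differentiableOn_fderiv_apply (isOpen_Uset n) (hΦ.differentiableOn μ) _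
    have hT : DifferentiableOn ℂ
        (fun p : (Fin n → ℂ) × ℂ => partialTau (Φ μ) p.1 p.2) (Uset n) :=
      differentiableOn_fderiv_apply (isOpen_Uset n) (hΦ.differentiableOn μ) _
    have hG : DifferentiableOn ℂ (fun p : (Fin n → ℂ) × ℂ => G2 p.2) (Uset n) :=
      differentiableOn_G2.comp differentiableOn_snd fun p hp => hp.1
    have hw : ∀ i, i ≠ j → DifferentiableOn ℂ
        (fun p : (Fin n → ℂ) × ℂ => wp1 (p.1 i - p.1 j) p.2) (Uset n) := fun i hij =>
      differentiableOn_wp1.comp (f := fun p : (Fin n → ℂ) × ℂ => (p.1 i - p.1 j, p.2))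
        (by fun_prop) fun p hp => ⟨hp.1, hp.2 i j hij⟩
    have hz : ∀ i, DifferentiableOn ℂ (fun p : (Fin n → ℂ) × ℂ => p.1 i) (Uset n) := fun i => by
      fun_prop
    refine DifferentiableOn.congr ?_ fun p hp => hΦ.DOp_eq a j μ hp
    refine (((hT.const_mul _).add (hG.mul (((hΦ.differentiableOn μ).const_mul a).add ?_))).add
      (hG.mul ?_)).sub ?_
    · exact DifferentiableOn.fun_sum fun i _ => hΦ.differentiableOn _
    · exact DifferentiableOn.fun_sum fun i _ => (hz i).mul (hZ i)
    · exact DifferentiableOn.fun_sum fun i hi => (hw i (Finset.mem_filter.mp hi).2).mul (hZ i)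
  eq_zero := by
    obtain ⟨N, hN⟩ := hΦ.eq_zero
    refine ⟨N, fun μ ⟨i, hi⟩ => ?_⟩
    have h₀ := hN μ ⟨i, hi⟩
    have h₁ : ∀ k, Φ (μ + Pi.single k 1) = 0 := fun k =>
      hN _ ⟨i, hi.trans (by simp)⟩
    funext z τ
    simp [DOp, h₀, h₁]

lemma dIter (hΦ : IsChi Φ) (α : ℂ) (j : Fin n) (k : ℕ) : IsChi (DIter n α j k Φ) := by
  induction k with
  | zero => exact hΦ
  | succ k ih => exact ih.dOp _ j

lemma exists_finset (hΦ : IsChi Φ) : ∃ S : Finset (Fin n → ℕ), ∀ μ, ∀ ν ∉ S, Φ (μ + ν) = 0 := by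
  obtain ⟨N, hN⟩ := hΦ.eq_zero
  refine ⟨Fintype.piFinset fun _ => Finset.range N, fun μ ν hν => ?_⟩
  simp only [Fintype.mem_piFinset, Finset.mem_range, not_forall, not_lt] at hν
  obtain ⟨i, hi⟩ := hν
  exact hN _ ⟨i, hi.trans (by simp)⟩

end IsChi

lemma DOp_congr {Φ Ψ : (Fin n → ℕ) → (Fin n → ℂ) → ℂ → ℂ}
    (h : ∀ z τ, (z, τ) ∈ Uset n → ∀ μ, Φ μ z τ = Ψ μ z τ) (a : ℂ) (j : Fin n)
    {z : Fin n → ℂ} {τ : ℂ} (hU : (z, τ) ∈ Uset n) (μ : Fin n → ℕ) :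
    DOp n a j Φ μ z τ = DOp n a j Ψ μ z τ := by
  have hnhds := (isOpen_Uset n).mem_nhds hU
  have hτ : deriv (fun t => Φ μ z t) τ = deriv (fun t => Ψ μ z t) τ := by
    refine Filter.EventuallyEq.deriv_eq ?_
    have hc : ContinuousAt (fun t : ℂ => (z, t)) τ := by fun_prop
    filter_upwards [hc hnhds] with t ht using h z t ht μ
  have hz : ∀ i, deriv (fun s => Φ μ (Function.update z i s) τ) (z i) =
      deriv (fun s => Ψ μ (Function.update z i s) τ) (z i) := by
    intro i
    refine Filter.EventuallyEq.deriv_eq ?_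
    have hc : ContinuousAt (fun s : ℂ => (Function.update z i s, τ)) (z i) := by fun_prop
    have hc' := hc.preimage_mem_nhds (t := Uset n) (by simpa using hnhds)
    filter_upwards [hc'] with s hs using h _ τ hs μ
  simp only [DOp, hτ, hz, h z τ hU]

end Families

/-! ### The slash action -/

section Slash

variable {n : ℕ}

lemma moebius_mem_Uset (g : Matrix.SpecialLinearGroup (Fin 2) ℤ) {z : Fin n → ℂ} {τ : ℂ}
    (h : (z, τ) ∈ Uset n) :
    ((fun i => z i / (((g 1 0 : ℤ) : ℂ) * τ + (g 1 1 : ℤ))),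
      (((g 0 0 : ℤ) : ℂ) * τ + (g 0 1 : ℤ)) / (((g 1 0 : ℤ) : ℂ) * τ + (g 1 1 : ℤ))) ∈ Uset n := by
  have hγ := denom_ne_zero_of_im_pos g h.1
  refine ⟨im_moebius_pos g h.1, fun i j hij k l heq => ?_⟩
  refine h.2 i j hij (k * g 0 0 + l * g 1 0) (k * g 0 1 + l * g 1 1) ?_
  dsimp only at heq ⊢
  push_cast
  field_simp at heq
  linear_combination heq

lemma hasDerivAt_denom (g : Matrix.SpecialLinearGroup (Fin 2) ℤ) (τ : ℂ) :
    HasDerivAt (fun t : ℂ => ((g 1 0 : ℤ) : ℂ) * t + (g 1 1 : ℤ)) (g 1 0 : ℤ) τ := by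
  simpa using ((hasDerivAt_id τ).const_mul ((g 1 0 : ℤ) : ℂ)).add_const ((g 1 1 : ℤ) : ℂ)

lemma hasDerivAt_moebius (g : Matrix.SpecialLinearGroup (Fin 2) ℤ) {τ : ℂ} (hτ : 0 < τ.im) :
    HasDerivAt (fun t : ℂ => (((g 0 0 : ℤ) : ℂ) * t + (g 0 1 : ℤ)) /
      (((g 1 0 : ℤ) : ℂ) * t + (g 1 1 : ℤ))) (1 / (((g 1 0 : ℤ) : ℂ) * τ + (g 1 1 : ℤ)) ^ 2) τ := by
  have hnum : HasDerivAt (fun t : ℂ => ((g 0 0 : ℤ) : ℂ) * t + (g 0 1 : ℤ)) (g 0 0 : ℤ) τ := by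
    simpa using ((hasDerivAt_id τ).const_mul ((g 0 0 : ℤ) : ℂ)).add_const ((g 0 1 : ℤ) : ℂ)
  have h := hnum.fun_div (hasDerivAt_denom g τ) (denom_ne_zero_of_im_pos g hτ)
  rwa [show ((g 0 0 : ℤ) : ℂ) * (((g 1 0 : ℤ) : ℂ) * τ + (g 1 1 : ℤ)) -
    (((g 0 0 : ℤ) : ℂ) * τ + (g 0 1 : ℤ)) * (g 1 0 : ℤ) = 1 by
      linear_combination det_cast g] at h

lemma hasDerivAt_div_denom (g : Matrix.SpecialLinearGroup (Fin 2) ℤ) (z : Fin n → ℂ) {τ : ℂ}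
    (hτ : 0 < τ.im) :
    HasDerivAt (fun (t : ℂ) i => z i / (((g 1 0 : ℤ) : ℂ) * t + (g 1 1 : ℤ)))
      (fun i => -(z i * (g 1 0 : ℤ)) / (((g 1 0 : ℤ) : ℂ) * τ + (g 1 1 : ℤ)) ^ 2) τ := by
  refine hasDerivAt_pi.mpr fun i => ?_
  simpa using (hasDerivAt_const τ (z i)).fun_div (hasDerivAt_denom g τ)
    (denom_ne_zero_of_im_pos g hτ)

lemma denom_mem_slitPlane (g : Matrix.SpecialLinearGroup (Fin 2) ℤ) (hg : g 1 0 ≠ 0) {τ : ℂ}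
    (hτ : 0 < τ.im) : ((g 1 0 : ℤ) : ℂ) * τ + (g 1 1 : ℤ) ∈ Complex.slitPlane := by
  refine Or.inr ?_
  simpa using ⟨hg, hτ.ne'⟩

lemma hasDerivAt_neg_log_denom (g : Matrix.SpecialLinearGroup (Fin 2) ℤ) {τ : ℂ}
    (hτ : 0 < τ.im) :
    HasDerivAt (fun t : ℂ => -Complex.log (((g 1 0 : ℤ) : ℂ) * t + (g 1 1 : ℤ)))
      (-((g 1 0 : ℤ) / (((g 1 0 : ℤ) : ℂ) * τ + (g 1 1 : ℤ)))) τ := by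
  by_cases hg : g 1 0 = 0
  · simpa [hg] using hasDerivAt_const τ _
  · exact ((hasDerivAt_denom g τ).clog (denom_mem_slitPlane g hg hτ)).neg

lemma hasDerivAt_denom_cpow (g : Matrix.SpecialLinearGroup (Fin 2) ℤ) (a : ℂ) {τ : ℂ}
    (hτ : 0 < τ.im) :
    HasDerivAt (fun t : ℂ => (((g 1 0 : ℤ) : ℂ) * t + (g 1 1 : ℤ)) ^ (-a))
      ((((g 1 0 : ℤ) : ℂ) * τ + (g 1 1 : ℤ)) ^ (-a) *
        (-a * ((g 1 0 : ℤ) / (((g 1 0 : ℤ) : ℂ) * τ + (g 1 1 : ℤ))))) τ := by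
  by_cases hg : g 1 0 = 0
  · simpa [hg] using hasDerivAt_const τ _
  · convert (hasDerivAt_denom g τ).cpow_const (c := -a) (denom_mem_slitPlane g hg hτ) using 1
    rw [Complex.cpow_sub _ _ (denom_ne_zero_of_im_pos g hτ), Complex.cpow_one]
    ring

/-- The coefficient `L^|ν| / ν!` of the exponential series in several variables. -/
noncomputable def expCoeff (L : ℂ) (ν : Fin n → ℕ) : ℂ :=
  L ^ (∑ i, ν i) / ∏ i, (Nat.factorial (ν i) : ℂ)

/-- The `i`-th summand `ν_i L^(|ν|-1) / ν!` of the derivative of `expCoeff` in `L`. -/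
noncomputable def expCoeffDeriv (L : ℂ) (ν : Fin n → ℕ) (i : Fin n) : ℂ :=
  ν i * L ^ (∑ k, ν k - 1) / ∏ k, (Nat.factorial (ν k) : ℂ)

lemma hasDerivAt_expCoeff {f : ℂ → ℂ} {f' s : ℂ} (hf : HasDerivAt f f' s) (ν : Fin n → ℕ) :
    HasDerivAt (fun t => expCoeff (f t) ν) (f' * ∑ i, expCoeffDeriv (f s) ν i) s := by
  have h := (hf.fun_pow (∑ i, ν i)).div_const (∏ i, (Nat.factorial (ν i) : ℂ))
  refine h.congr_deriv ?_
  simp only [expCoeffDeriv, ← Finset.sum_div, ← Finset.sum_mul]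
  push_cast
  ring

lemma expCoeffDeriv_add_single (L : ℂ) (ν : Fin n → ℕ) (i : Fin n) :
    expCoeffDeriv L (ν + Pi.single i 1) i = expCoeff L ν := by
  have hs : ∑ k, (ν + Pi.single i 1 : Fin n → ℕ) k = ∑ k, ν k + 1 := by
    simp [Finset.sum_add_distrib]
  have hp : ∏ k, (Nat.factorial ((ν + Pi.single i 1 : Fin n → ℕ) k) : ℂ) =
      (ν i + 1) * ∏ k, (Nat.factorial (ν k) : ℂ) := by
    rw [← Finset.mul_prod_erase _ _ (Finset.mem_univ i),
      ← Finset.mul_prod_erase _ (fun k => (Nat.factorial (ν k) : ℂ)) (Finset.mem_univ i),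
      ← mul_assoc]
    congr 1
    · simp [Nat.factorial_succ]
    · refine Finset.prod_congr rfl fun k hk => ?_
      simp [Finset.ne_of_mem_erase hk]
  have hne : (ν i + 1 : ℂ) ≠ 0 := Nat.cast_add_one_ne_zero _
  have hfac : ∏ k, (Nat.factorial (ν k) : ℂ) ≠ 0 :=
    Finset.prod_ne_zero_iff.mpr fun k _ => by exact_mod_cast Nat.factorial_ne_zero _
  rw [expCoeffDeriv, expCoeff, hs, hp]
  simp only [Pi.add_apply, Pi.single_eq_same, Nat.add_sub_cancel]
  push_cast
  field_simp

lemma tsum_expCoeffDeriv_mul (L : ℂ) (i : Fin n) (f : (Fin n → ℕ) → ℂ) :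
    ∑' ν, expCoeffDeriv L ν i * f ν = ∑' ν, expCoeff L ν * f (ν + Pi.single i 1) := by
  rw [← (add_left_injective (Pi.single i 1 : Fin n → ℕ)).tsum_eq]
  · simp only [expCoeffDeriv_add_single]
  · intro ν hν
    have hi : ν i ≠ 0 := fun h0 => hν (by simp [expCoeffDeriv, h0])
    refine ⟨ν - Pi.single i 1, ?_⟩
    funext k
    rcases eq_or_ne k i with rfl | hk
    · simp only [Pi.add_apply, Pi.sub_apply, Pi.single_eq_same]
      omega
    · simp [hk]

lemma sum_expCoeffDeriv_mul (L : ℂ) (i : Fin n) {f : (Fin n → ℕ) → ℂ} {S : Finset (Fin n → ℕ)}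
    (hS : ∀ ν ∉ S, f ν = 0) (hS' : ∀ ν ∉ S, f (ν + Pi.single i 1) = 0) :
    ∑ ν ∈ S, expCoeffDeriv L ν i * f ν = ∑ ν ∈ S, expCoeff L ν * f (ν + Pi.single i 1) := by
  have h := tsum_expCoeffDeriv_mul L i f
  rwa [tsum_eq_sum (s := S) fun ν hν => by simp [hS ν hν],
    tsum_eq_sum (s := S) fun ν hν => by simp [hS' ν hν]] at h

lemma slashAct_eq_sum (g : Matrix.SpecialLinearGroup (Fin 2) ℤ) (a : ℂ)
    {Φ : (Fin n → ℕ) → (Fin n → ℂ) → ℂ → ℂ} {S : Finset (Fin n → ℕ)} {μ : Fin n → ℕ}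
    (hS : ∀ ν ∉ S, Φ (μ + ν) = 0) (z : Fin n → ℂ) (τ : ℂ) :
    SlashAct n g a Φ μ z τ = (((g 1 0 : ℤ) : ℂ) * τ + (g 1 1 : ℤ)) ^ (-a) *
      ∑ ν ∈ S, expCoeff (-Complex.log (((g 1 0 : ℤ) : ℂ) * τ + (g 1 1 : ℤ))) ν *
        Φ (μ + ν) (fun i => z i / (((g 1 0 : ℤ) : ℂ) * τ + (g 1 1 : ℤ)))
          ((((g 0 0 : ℤ) : ℂ) * τ + (g 0 1 : ℤ)) / (((g 1 0 : ℤ) : ℂ) * τ + (g 1 1 : ℤ))) := by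
  rw [SlashAct, tsum_eq_sum (s := S) fun ν hν => by simp [hS ν hν]]
  rfl

lemma IsChi.hasDerivAt_slashAct_tau {Φ : (Fin n → ℕ) → (Fin n → ℂ) → ℂ → ℂ} (hΦ : IsChi Φ)
    (g : Matrix.SpecialLinearGroup (Fin 2) ℤ) (a : ℂ) {S : Finset (Fin n → ℕ)}
    (hS : ∀ μ, ∀ ν ∉ S, Φ (μ + ν) = 0) (μ : Fin n → ℕ) {z w : Fin n → ℂ} {τ γ τ' L : ℂ}
    (h : (z, τ) ∈ Uset n) (hγ : γ = ((g 1 0 : ℤ) : ℂ) * τ + (g 1 1 : ℤ))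
    (hτ' : τ' = (((g 0 0 : ℤ) : ℂ) * τ + (g 0 1 : ℤ)) / γ) (hw : w = fun i => z i / γ)
    (hL : L = -Complex.log γ) :
    HasDerivAt (fun t => SlashAct n g a Φ μ z t)
      (γ ^ (-a) * (-a * ((g 1 0 : ℤ) / γ) * ∑ ν ∈ S, expCoeff L ν * Φ (μ + ν) w τ'
        - (g 1 0 : ℤ) / γ * ∑ i, ∑ ν ∈ S, expCoeff L ν * Φ (μ + ν + Pi.single i 1) w τ'
        + 1 / γ ^ 2 * ∑ ν ∈ S, expCoeff L ν * partialTau (Φ (μ + ν)) w τ'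
        - (g 1 0 : ℤ) / γ ^ 2 *
          ∑ i, z i * ∑ ν ∈ S, expCoeff L ν * partialZ i (Φ (μ + ν)) w τ')) τ := by
  have hU := moebius_mem_Uset g h
  have hsum := HasDerivAt.fun_sum fun ν (_ : ν ∈ S) =>
    (hasDerivAt_expCoeff (hasDerivAt_neg_log_denom g h.1) ν).fun_mul
      (hΦ.hasDerivAt_comp (μ + ν) (hasDerivAt_div_denom g z h.1) (hasDerivAt_moebius g h.1) hU)
  have hmain := (hasDerivAt_denom_cpow g a h.1).fun_mul hsum
  simp only [slashAct_eq_sum g a (hS μ)]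
  refine hmain.congr_deriv ?_
  simp only [← hγ]
  simp only [← hτ', ← hw, ← hL]
  have hshift : ∀ i, ∑ ν ∈ S, expCoeff L ν * Φ (μ + ν + Pi.single i 1) w τ' =
      ∑ ν ∈ S, expCoeffDeriv L ν i * Φ (μ + ν) w τ' := by
    intro i
    rw [sum_expCoeffDeriv_mul L i (f := fun ν => Φ (μ + ν) w τ')
      (fun ν hν => by simp [hS μ ν hν])
      (fun ν hν => by rw [← add_assoc, add_right_comm, hS _ ν hν]; rfl)]
    simp only [add_assoc]
  simp only [hshift, Finset.mul_sum, Finset.sum_add_distrib, Finset.sum_mul, mul_add, mul_sub]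
  rw [Finset.sum_comm (s := Finset.univ), Finset.sum_comm (s := Finset.univ) (t := S)]
  simp only [← Finset.sum_add_distrib, ← Finset.sum_sub_distrib]
  refine Finset.sum_congr rfl fun ν _ => ?_
  have e₁ : ∑ i, γ ^ (-a) * ((g 1 0 : ℤ) / γ * (expCoeffDeriv L ν i * Φ (μ + ν) w τ')) =
      -∑ i, γ ^ (-a) * (-((g 1 0 : ℤ) / γ) * expCoeffDeriv L ν i * Φ (μ + ν) w τ') := by
    rw [← Finset.sum_neg_distrib]
    exact Finset.sum_congr rfl fun i _ => by ring
  have e₂ : ∑ i, γ ^ (-a) *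
        ((g 1 0 : ℤ) / γ ^ 2 * (z i * (expCoeff L ν * partialZ i (Φ (μ + ν)) w τ'))) =
      -∑ i, γ ^ (-a) *
        (expCoeff L ν * (-(z i * (g 1 0 : ℤ)) / γ ^ 2 * partialZ i (Φ (μ + ν)) w τ')) := by
    rw [← Finset.sum_neg_distrib]
    exact Finset.sum_congr rfl fun i _ => by ring
  rw [e₁, e₂]
  ring

lemma IsChi.hasDerivAt_slashAct_update {Φ : (Fin n → ℕ) → (Fin n → ℂ) → ℂ → ℂ} (hΦ : IsChi Φ)
    (g : Matrix.SpecialLinearGroup (Fin 2) ℤ) (a : ℂ) {S : Finset (Fin n → ℕ)}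
    (hS : ∀ μ, ∀ ν ∉ S, Φ (μ + ν) = 0) (μ : Fin n → ℕ) {z w : Fin n → ℂ} {τ γ τ' L : ℂ}
    (h : (z, τ) ∈ Uset n) (hγ : γ = ((g 1 0 : ℤ) : ℂ) * τ + (g 1 1 : ℤ))
    (hτ' : τ' = (((g 0 0 : ℤ) : ℂ) * τ + (g 0 1 : ℤ)) / γ) (hw : w = fun i => z i / γ)
    (hL : L = -Complex.log γ) (i : Fin n) :
    HasDerivAt (fun s => SlashAct n g a Φ μ (Function.update z i s) τ)
      (γ ^ (-a) * (1 / γ * ∑ ν ∈ S, expCoeff L ν * partialZ i (Φ (μ + ν)) w τ')) (z i) := by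
  have hU := moebius_mem_Uset g h
  simp only [slashAct_eq_sum g a (hS μ), ← hγ] at hU ⊢
  simp only [← hτ', ← hL] at hU ⊢
  subst hw
  refine ((HasDerivAt.fun_sum fun ν (_ : ν ∈ S) =>
    (hΦ.hasDerivAt_update (μ + ν) hU i).const_mul (expCoeff L ν)).const_mul
      (γ ^ (-a))).congr_deriv ?_
  rw [Finset.mul_sum (a := 1 / γ)]
  exact congrArg _ (Finset.sum_congr rfl fun ν _ => by ring)

/-- The operator `𝒟_j(a)` intertwines the slash actions of weights `a` and `a + 2`. -/
lemma IsChi.DOp_slashAct {Φ : (Fin n → ℕ) → (Fin n → ℂ) → ℂ → ℂ} (hΦ : IsChi Φ)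
    (g : Matrix.SpecialLinearGroup (Fin 2) ℤ) (a : ℂ) (j : Fin n) {z : Fin n → ℂ} {τ : ℂ}
    (h : (z, τ) ∈ Uset n) (μ : Fin n → ℕ) :
    DOp n a j (SlashAct n g a Φ) μ z τ = SlashAct n g (a + 2) (DOp n a j Φ) μ z τ := by
  obtain ⟨S₁, hS₁⟩ := hΦ.exists_finset
  obtain ⟨S₂, hS₂⟩ := (hΦ.dOp a j).exists_finset
  obtain ⟨S, hS, hS'⟩ : ∃ S : Finset (Fin n → ℕ), (∀ μ, ∀ ν ∉ S, Φ (μ + ν) = 0) ∧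
      ∀ μ, ∀ ν ∉ S, DOp n a j Φ (μ + ν) = 0 := by
    classical
    exact ⟨S₁ ∪ S₂, fun μ ν hν => hS₁ μ ν fun h => hν (Finset.mem_union_left _ h),
      fun μ ν hν => hS₂ μ ν fun h => hν (Finset.mem_union_right _ h)⟩
  obtain ⟨γ, hγ⟩ : ∃ γ, γ = ((g 1 0 : ℤ) : ℂ) * τ + (g 1 1 : ℤ) := ⟨_, rfl⟩
  obtain ⟨τ', hτ'⟩ : ∃ τ', τ' = (((g 0 0 : ℤ) : ℂ) * τ + (g 0 1 : ℤ)) / γ := ⟨_, rfl⟩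
  obtain ⟨w, hw⟩ : ∃ w : Fin n → ℂ, w = fun i => z i / γ := ⟨_, rfl⟩
  obtain ⟨L, hL⟩ : ∃ L, L = -Complex.log γ := ⟨_, rfl⟩
  have hγ0 : γ ≠ 0 := hγ ▸ denom_ne_zero_of_im_pos g h.1
  have hU : (w, τ') ∈ Uset n := by
    have := moebius_mem_Uset g h
    rwa [← hγ, ← hτ', ← hw] at this
  have hG := G2_moebius g h.1
  have hwp := wp1_moebius g h.1
  rw [← hγ, ← hτ'] at hG
  simp only [← hγ, ← hτ'] at hwp
  have hwij : ∀ i, wp1 (w i - w j) τ' = γ * wp1 (z i - z j) τ := fun i => by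
    rw [← hwp, hw, sub_div]
  have hY : ∀ ν, SlashAct n g a Φ ν z τ =
      γ ^ (-a) * ∑ ν' ∈ S, expCoeff L ν' * Φ (ν + ν') w τ' := fun ν => by
    simp only [slashAct_eq_sum g a (hS ν), ← hγ]
    rw [← hτ', ← hL, hw]
  have hR : SlashAct n g (a + 2) (DOp n a j Φ) μ z τ =
      γ ^ (-(a + 2)) * ∑ ν ∈ S, expCoeff L ν * DOp n a j Φ (μ + ν) w τ' := by
    simp only [slashAct_eq_sum g (a + 2) (hS' μ), ← hγ]
    rw [← hτ', ← hL, hw]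
  have hpow : γ ^ (-(a + 2)) = γ ^ (-a) / γ ^ 2 := by
    rw [neg_add, ← sub_eq_add_neg, Complex.cpow_sub _ _ hγ0]
    norm_cast
  set X := ∑ ν ∈ S, expCoeff L ν * Φ (μ + ν) w τ' with hX
  set Y := fun i => ∑ ν ∈ S, expCoeff L ν * Φ (μ + ν + Pi.single i 1) w τ' with hYdef
  set T := ∑ ν ∈ S, expCoeff L ν * partialTau (Φ (μ + ν)) w τ' with hT
  set Z := fun i => ∑ ν ∈ S, expCoeff L ν * partialZ i (Φ (μ + ν)) w τ' with hZ
  have hD : ∑ ν ∈ S, expCoeff L ν * DOp n a j Φ (μ + ν) w τ' =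
      2 * π * Complex.I * T + G2 τ' * (a * X + ∑ i, Y i) + G2 τ' * ∑ i, w i * Z i -
        ∑ i ∈ Finset.univ.filter (fun i : Fin n => i ≠ j), wp1 (w i - w j) τ' * Z i := by
    simp only [hΦ.DOp_eq a j _ hU, hX, hYdef, hT, hZ, Finset.mul_sum, mul_add, mul_sub,
      Finset.sum_add_distrib, Finset.sum_sub_distrib]
    rw [Finset.sum_comm (t := S), Finset.sum_comm (t := S), Finset.sum_comm (t := S)]
    simp only [mul_comm, mul_left_comm, mul_assoc]
  have hYs : ∀ i, SlashAct n g a Φ (μ + Pi.single i 1) z τ = γ ^ (-a) * Y i := fun i => by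
    rw [hY]
    simp only [hYdef, add_right_comm]
  rw [hR, hD, hpow, DOp, (hΦ.hasDerivAt_slashAct_tau g a hS μ h hγ hτ' hw hL).deriv]
  simp only [(hΦ.hasDerivAt_slashAct_update g a hS μ h hγ hτ' hw hL _).deriv, hYs, hwij]
  rw [hY μ, ← hX, ← hT]
  have e₁ : ∑ i, γ ^ (-a) * Y i = γ ^ (-a) * ∑ i, Y i := by rw [Finset.mul_sum]
  have e₂ : ∑ i, z i * (γ ^ (-a) * (1 / γ * Z i)) = γ ^ (-a) / γ * ∑ i, z i * Z i := by
    rw [Finset.mul_sum]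
    exact Finset.sum_congr rfl fun i _ => by ring
  have e₃ : ∑ i, w i * Z i = 1 / γ * ∑ i, z i * Z i := by
    rw [Finset.mul_sum, hw]
    exact Finset.sum_congr rfl fun i _ => by ring
  have e₄ : ∑ i ∈ Finset.univ.filter (fun i : Fin n => i ≠ j),
        wp1 (z i - z j) τ * (γ ^ (-a) * (1 / γ * Z i)) =
      γ ^ (-a) / γ * ∑ i ∈ Finset.univ.filter (fun i : Fin n => i ≠ j),
        wp1 (z i - z j) τ * Z i := by
    rw [Finset.mul_sum]
    exact Finset.sum_congr rfl fun i _ => by ring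
  have e₅ : ∑ i ∈ Finset.univ.filter (fun i : Fin n => i ≠ j), γ * wp1 (z i - z j) τ * Z i =
      γ * ∑ i ∈ Finset.univ.filter (fun i : Fin n => i ≠ j), wp1 (z i - z j) τ * Z i := by
    rw [Finset.mul_sum]
    exact Finset.sum_congr rfl fun i _ => by ring
  rw [e₁, e₂, e₃, e₄, e₅, hG]
  field_simp
  ring

lemma IsChi.DIter_slashAct {Φ : (Fin n → ℕ) → (Fin n → ℂ) → ℂ → ℂ} (hΦ : IsChi Φ)
    (g : Matrix.SpecialLinearGroup (Fin 2) ℤ) (α : ℂ) (j : Fin n) (k : ℕ) {z : Fin n → ℂ} {τ : ℂ}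
    (h : (z, τ) ∈ Uset n) (μ : Fin n → ℕ) :
    DIter n α j k (SlashAct n g α Φ) μ z τ =
      SlashAct n g (α + 2 * k) (DIter n α j k Φ) μ z τ := by
  induction k generalizing z τ μ with
  | zero => simp [DIter]
  | succ k ih =>
    rw [DIter, DOp_congr (fun z τ h μ => ih h μ) _ j h, (hΦ.dIter α j k).DOp_slashAct g _ j h,
      DIter]
    push_cast
    ring_nf

end Slash

/-- Modular invariance of the space of solutions: if the coefficients `b_p` transform
with weight `2p` under `g ∈ SL₂(ℤ)` and `Φ ∈ χ` satisfies
`(𝒟_j(α+2(m−1)) ∘ ⋯ ∘ 𝒟_j(α))Φ + Σ_{p=1}^m b_p·(𝒟_j(α+2(m−p−1)) ∘ ⋯ ∘ 𝒟_j(α))Φ = 0`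
on `U`, then `Φ|_{g,α}` satisfies the same differential equation on `U`. -/
theorem slash_invariance_of_solutions (n : ℕ) (hn : 1 ≤ n)
    (g : Matrix.SpecialLinearGroup (Fin 2) ℤ) (j : Fin n) (m : ℕ) (hm : 1 ≤ m)
    (α : ℂ) (b : Fin m → (Fin n → ℂ) → ℂ → ℂ)
    (hb : ∀ (p : Fin m) (z : Fin n → ℂ) (τ : ℂ), (z, τ) ∈ Uset n →
      b p (fun i => z i / ((g 1 0 : ℤ) * τ + (g 1 1 : ℤ)))
          (((g 0 0 : ℤ) * τ + (g 0 1 : ℤ)) / ((g 1 0 : ℤ) * τ + (g 1 1 : ℤ))) =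
        ((g 1 0 : ℤ) * τ + (g 1 1 : ℤ)) ^ (2 * ((p : ℕ) + 1)) * b p z τ)
    (Φ : (Fin n → ℕ) → (Fin n → ℂ) → ℂ → ℂ)
    (hΦhol : ∀ μ, DifferentiableOn ℂ (fun p : (Fin n → ℂ) × ℂ => Φ μ p.1 p.2) (Uset n))
    (hΦfin : ∃ N : ℕ, ∀ μ : Fin n → ℕ, (∃ i, N ≤ μ i) → Φ μ = 0)
    (hΦeq : ∀ (z : Fin n → ℂ) (τ : ℂ), (z, τ) ∈ Uset n → ∀ μ : Fin n → ℕ,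
      DIter n α j m Φ μ z τ +
        ∑ p : Fin m, b p z τ * DIter n α j (m - ((p : ℕ) + 1)) Φ μ z τ = 0) :
    ∀ (z : Fin n → ℂ) (τ : ℂ), (z, τ) ∈ Uset n → ∀ μ : Fin n → ℕ,
      DIter n α j m (SlashAct n g α Φ) μ z τ +
        ∑ p : Fin m, b p z τ * DIter n α j (m - ((p : ℕ) + 1)) (SlashAct n g α Φ) μ z τ = 0 := by
  intro z τ h μ
  have hΦ : IsChi Φ := ⟨hΦhol, hΦfin⟩
  obtain ⟨S, hS⟩ : ∃ S : Finset (Fin n → ℕ), ∀ k ≤ m, ∀ ν ∉ S, DIter n α j k Φ (μ + ν) = 0 := by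
    classical
    choose S hS using fun k => (hΦ.dIter α j k).exists_finset
    refine ⟨(Finset.range (m + 1)).biUnion S, fun k hk ν hν => hS k μ ν fun hmem => hν ?_⟩
    exact Finset.mem_biUnion.mpr ⟨k, Finset.mem_range.mpr (by omega), hmem⟩
  have hγ0 := denom_ne_zero_of_im_pos g h.1
  have hU := moebius_mem_Uset g h
  have hterm : ∀ k ≤ m, DIter n α j k (SlashAct n g α Φ) μ z τ = _ := fun k hk =>
    (hΦ.DIter_slashAct g α j k h μ).trans (slashAct_eq_sum g _ (hS k hk) z τ)
  have hbz := fun p => hb p z τ h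
  have heq := hΦeq _ _ hU
  rw [hterm m le_rfl]
  simp only [hterm _ (Nat.sub_le _ _)]
  simp only [hbz] at heq
  set γ := ((g 1 0 : ℤ) : ℂ) * τ + (g 1 1 : ℤ)
  have hpow : ∀ p : Fin m, γ ^ (-(α + 2 * ((m - ((p : ℕ) + 1) : ℕ) : ℂ))) =
      γ ^ (-(α + 2 * (m : ℂ))) * γ ^ (2 * ((p : ℕ) + 1)) := fun p => by
    rw [← Complex.cpow_natCast γ (2 * ((p : ℕ) + 1)), ← Complex.cpow_add _ _ hγ0,
      Nat.cast_sub (by omega)]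
    push_cast
    ring_nf
  simp only [hpow, Finset.mul_sum]
  rw [Finset.sum_comm, ← Finset.sum_add_distrib]
  refine Finset.sum_eq_zero fun ν _ => ?_
  rw [← mul_zero (γ ^ (-(α + 2 * (m : ℂ))) * expCoeff (-Complex.log γ) ν), ← heq (μ + ν), mul_add,
    Finset.mul_sum, mul_assoc]
  refine congrArg _ (Finset.sum_congr rfl fun p _ => ?_)
  ring
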